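/- Let g ∈ L¹((0,1); ℤ) be an integer-valued function, and suppose there exists a sequence t_l → 0⁺ such that ‖Δ²_{t_l} g‖_{L¹((0,1))} / t_l → 0 as l → ∞, where Δ²_t g(x) = g(x+2t) − 2g(x+t) + g(x) when x, x+t, x+2t ∈ (0,1) and 0 otherwise. Then g is constant a.e. on (0,1). -/

import Mathlib

/-!
An integer-valued `L¹` function on `(0,1)` whose second differences are `o(t)` along some
sequence `t_l → 0⁺` is constant a.e.
-/

open MeasureTheory Set Filter Topology
open scoped Classical

noncomputable section

/-- Second-order difference of `g` with step `t`, restricted to `(0,1)`. -/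
def delta2 (t : ℝ) (g : ℝ → ℝ) (x : ℝ) : ℝ :=
  if x ∈ Set.Ioo (0 : ℝ) 1 ∧ x + t ∈ Set.Ioo (0 : ℝ) 1 ∧ x + 2 * t ∈ Set.Ioo (0 : ℝ) 1 then
    g (x + 2 * t) - 2 * g (x + t) + g x
  else 0

/-!
A second difference of an integer-valued function is at least `1` in absolute value wherever it
does not vanish, so for small `t = t_l` the points with nonzero second difference form a set of
measure `o(t)`. Fix `s > 0` and let `k = ⌊s / t⌋`. Off a set of measure `k * o(t) = o(1)` the values
at `x, x + t, …, x + k * t` form an arithmetic progression of integers; if it is not constant, its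
endpoints differ by at least `k`, so `g` has absolute value at least `k / 2` at one of them, which
is rare as `k → ∞`. Hence the set where `g (x + k * t) ≠ g x` has measure `o(1)`. Since `k * t → s`
and translation moves each level set continuously in measure, `g (x + s) = g x` for a.e. `x`, for
every `s`. By Fubini some `x` satisfies this for a.e. `s`, and `g` is a.e. equal to its value there.
-/

lemma sub_eq_nsmul_of_sub_eq_sub {M : Type*} [AddCommGroup M] {u : ℕ → M} {k : ℕ}
    (h : ∀ j, j + 2 ≤ k → u (j + 2) - u (j + 1) = u (j + 1) - u j) :
    u k - u 0 = k • (u 1 - u 0) := by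
  have hstep : ∀ j < k, u (j + 1) - u j = u 1 - u 0 := by
    intro j
    induction j with
    | zero => simp
    | succ j ih =>
      intro hj
      rw [h j (by lia), ih (by lia)]
  rw [← Finset.sum_range_sub, Finset.sum_congr rfl fun j hj ↦ hstep j (Finset.mem_range.1 hj),
    Finset.sum_const, Finset.card_range]

lemma natCast_le_abs_sub_of_sub_eq_sub {u : ℕ → ℤ} {k : ℕ}
    (h : ∀ j, j + 2 ≤ k → u (j + 2) - u (j + 1) = u (j + 1) - u j) (hne : u k ≠ u 0) :
    (k : ℤ) ≤ |u k - u 0| := by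
  have hk : u k - u 0 = k * (u 1 - u 0) := by
    simpa only [nsmul_eq_mul] using sub_eq_nsmul_of_sub_eq_sub h
  have hslope : u 1 - u 0 ≠ 0 := fun h0 ↦ hne (sub_eq_zero.1 (by rw [hk, h0, mul_zero]))
  rw [hk, abs_mul, Nat.abs_cast]
  exact le_mul_of_one_le_right (Nat.cast_nonneg k) (Int.one_le_abs hslope)

lemma tendsto_measure_symmDiff_preimage_add_right {G ι : Type*} [AddGroup G] [TopologicalSpace G]
    [ContinuousAdd G] [R1Space G] [MeasurableSpace G] [BorelSpace G] {μ : Measure G}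
    [μ.IsAddRightInvariant] [μ.InnerRegularCompactLTTop] [IsLocallyFiniteMeasure μ]
    {l : Filter ι} {r : ι → G} {s : G} (hr : Tendsto r l (𝓝 s)) {E : Set G}
    (hE : NullMeasurableSet E μ) (hE_fin : μ E ≠ ⊤) :
    Tendsto (fun i ↦ μ (symmDiff ((· + r i) ⁻¹' E) ((· + s) ⁻¹' E))) l (𝓝 0) := by
  have hcont : Continuous (ContinuousMap.addRight : G → C(G, G)) :=
    ContinuousMap.continuous_of_continuous_uncurry _ (continuous_snd.add continuous_fst)
  have hlim : Tendsto (fun i ↦ ContinuousMap.addRight (r i)) l (𝓝 (ContinuousMap.addRight s)) :=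
    (hcont.tendsto s).comp hr
  have hmp (c : G) : MeasurePreserving (ContinuousMap.addRight c) μ μ :=
    measurePreserving_add_right μ c
  have := tendsto_measure_symmDiff_preimage_nhds_zero hlim (Eventually.of_forall fun i ↦ hmp (r i))
    (hmp s) hE hE_fin
  simpa only [ContinuousMap.coe_addRight] using this

lemma ae_add_right_of_ae {G : Type*} [AddGroup G] [MeasurableSpace G] [MeasurableAdd G]
    {μ : Measure G} [μ.IsAddRightInvariant] {p : G → Prop} (h : ∀ᵐ x ∂μ, p x) (c : G) :
    ∀ᵐ x ∂μ, p (x + c) :=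
  (measurePreserving_add_right μ c).quasiMeasurePreserving.ae h

/-- The points `x` of `I` with `x + s ∈ I` at which the first difference `g (x + s) - g x` does not
vanish; no subtraction is required on `β`. -/
def firstDiffSupport {β : Type*} (I : Set ℝ) (s : ℝ) (g : ℝ → β) : Set ℝ :=
  {x | x ∈ I ∧ x + s ∈ I ∧ g (x + s) ≠ g x}

/-- The points `x` of `I` with `x + 2 * t ∈ I` at which the second difference of `g` with step `t`
does not vanish. The condition `x + t ∈ I` is left out: it is automatic for an interval `I`. -/
def secondDiffSupport {R : Type*} [Ring R] (I : Set ℝ) (t : ℝ) (g : ℝ → R) : Set ℝ :=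
  {x | x ∈ I ∧ x + 2 * t ∈ I ∧ g (x + 2 * t) - 2 * g (x + t) + g x ≠ 0}

lemma secondDiffSupport_mono {R : Type*} [Ring R] {I J : Set ℝ} (hIJ : I ⊆ J) (t : ℝ)
    (g : ℝ → R) : secondDiffSupport I t g ⊆ secondDiffSupport J t g :=
  fun _ ⟨hx, hx2, hne⟩ ↦ ⟨hIJ hx, hIJ hx2, hne⟩

lemma firstDiffSupport_eq_iUnion_inter_Icc {β : Type*} (I : Set ℝ) (s : ℝ) (g : ℝ → β) :
    firstDiffSupport I s g = ⋃ n : ℕ, firstDiffSupport (I ∩ Icc (-n : ℝ) n) s g := by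
  ext x
  simp only [mem_iUnion]
  refine ⟨fun ⟨hx, hxs, hne⟩ ↦ ?_, fun ⟨n, hx, hxs, hne⟩ ↦ ⟨hx.1, hxs.1, hne⟩⟩
  obtain ⟨n, hn⟩ := exists_nat_ge (max |x| |x + s|)
  obtain ⟨hn, hns⟩ := max_le_iff.1 hn
  exact ⟨n, ⟨hx, abs_le.1 hn⟩, ⟨hxs, abs_le.1 hns⟩, hne⟩

lemma firstDiffSupport_neg {β : Type*} (I : Set ℝ) (s : ℝ) (g : ℝ → β) :
    firstDiffSupport I (-s) g = (· + -s) ⁻¹' firstDiffSupport I s g := by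
  ext x
  simp only [firstDiffSupport, mem_preimage, mem_ofPred_eq, neg_add_cancel_right, ne_comm]
  tauto

section Integer

variable {I : Set ℝ} {t : ℝ}

lemma firstDiffSupport_mul_subset (hI : I.OrdConnected) (ht : 0 ≤ t) (k : ℕ) (G : ℝ → ℤ) :
    firstDiffSupport I (k * t) G ⊆
      (⋃ j ∈ Finset.range k, (· + j * t) ⁻¹' secondDiffSupport I t G) ∪
        ({x ∈ I | (k : ℤ) ≤ 2 * |G x|} ∪ (· + k * t) ⁻¹' {x ∈ I | (k : ℤ) ≤ 2 * |G x|}) := by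
  rintro x ⟨hx, hxk, hne⟩
  have hmem : ∀ j : ℕ, j ≤ k → x + j * t ∈ I := fun j hj ↦
    hI.out hx hxk ⟨by simpa using by positivity, by gcongr⟩
  by_cases hprog : ∀ j, j + 2 ≤ k →
      G (x + (j + 2 : ℕ) * t) - G (x + (j + 1 : ℕ) * t) =
        G (x + (j + 1 : ℕ) * t) - G (x + j * t)
  · right
    have hjump : (k : ℤ) ≤ |G (x + k * t) - G x| := by
      simpa using natCast_le_abs_sub_of_sub_eq_sub (u := fun j ↦ G (x + j * t)) hprog
        (by simpa using hne)
    have htri : |G (x + k * t) - G x| ≤ |G (x + k * t)| + |G x| := abs_sub _ _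
    rcases le_total |G x| |G (x + k * t)| with hle | hle
    · exact Or.inr ⟨hxk, by lia⟩
    · exact Or.inl ⟨hx, by lia⟩
  · left
    push Not at hprog
    obtain ⟨j, hj, hjne⟩ := hprog
    have h1 : x + j * t + t = x + (j + 1 : ℕ) * t := by push_cast; ring
    have h2 : x + j * t + 2 * t = x + (j + 2 : ℕ) * t := by push_cast; ring
    refine mem_biUnion (Finset.mem_coe.2 (Finset.mem_range.2 (by lia : j < k)))
      ⟨hmem j (by lia), h2 ▸ hmem (j + 2) hj, ?_⟩
    rw [h1, h2]
    lia

lemma volume_firstDiffSupport_mul_le (hI : I.OrdConnected) (ht : 0 ≤ t) (k : ℕ) (G : ℝ → ℤ) :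
    volume (firstDiffSupport I (k * t) G) ≤
      k * volume (secondDiffSupport I t G) + 2 * volume {x ∈ I | (k : ℤ) ≤ 2 * |G x|} :=
  calc
    volume (firstDiffSupport I (k * t) G)
      ≤ volume (⋃ j ∈ Finset.range k, (· + j * t) ⁻¹' secondDiffSupport I t G) +
          volume ({x ∈ I | (k : ℤ) ≤ 2 * |G x|} ∪
            (· + k * t) ⁻¹' {x ∈ I | (k : ℤ) ≤ 2 * |G x|}) :=
        (measure_mono (firstDiffSupport_mul_subset hI ht k G)).trans (measure_union_le _ _)
    _ ≤ ∑ j ∈ Finset.range k, volume ((· + j * t) ⁻¹' secondDiffSupport I t G) +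
          (volume {x ∈ I | (k : ℤ) ≤ 2 * |G x|} +
            volume ((· + k * t) ⁻¹' {x ∈ I | (k : ℤ) ≤ 2 * |G x|})) :=
        add_le_add (measure_biUnion_finset_le _ _) (measure_union_le _ _)
    _ = k * volume (secondDiffSupport I t G) + 2 * volume {x ∈ I | (k : ℤ) ≤ 2 * |G x|} := by
        simp only [measure_preimage_add_right, Finset.sum_const, Finset.card_range,
          nsmul_eq_mul, two_mul]

lemma tendsto_measure_natCast_le_two_mul_abs {α : Type*} [MeasurableSpace α] {μ : Measure α}
    {s : Set α} {f : α → ℤ} (hs : MeasurableSet s) (hs_fin : μ s ≠ ⊤) (hf : Measurable f) :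
    Tendsto (fun k : ℕ ↦ μ {x ∈ s | (k : ℤ) ≤ 2 * |f x|}) atTop (𝓝 0) := by
  have hmeas (k : ℕ) : MeasurableSet {x ∈ s | (k : ℤ) ≤ 2 * |f x|} :=
    hs.inter (hf (MeasurableSet.of_discrete (s := {m : ℤ | (k : ℤ) ≤ 2 * |m|})))
  have hanti : Antitone fun k : ℕ ↦ {x ∈ s | (k : ℤ) ≤ 2 * |f x|} :=
    fun i j hij x hx ↦ ⟨hx.1, (Nat.cast_le.2 hij).trans hx.2⟩
  have hempty : ⋂ k : ℕ, {x ∈ s | (k : ℤ) ≤ 2 * |f x|} = ∅ := by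
    refine eq_empty_of_forall_notMem fun x hx ↦ ?_
    have := (mem_iInter.1 hx ((2 * |f x|).toNat + 1)).2
    lia
  have := tendsto_measure_iInter_atTop (fun k ↦ (hmeas k).nullMeasurableSet) hanti
    ⟨0, measure_ne_top_of_subset (sep_subset _ _) hs_fin⟩
  rwa [hempty, measure_empty] at this

end Integer

section Limit

variable {ι : Type*} {l : Filter ι} {t : ι → ℝ} {I : Set ℝ} {G : ℝ → ℤ} {s : ℝ}

lemma tendsto_floor_div_mul (ht : Tendsto t l (𝓝[>] 0)) (hs : 0 ≤ s) :
    Tendsto (fun i ↦ ⌊s / t i⌋₊ * t i) l (𝓝 s) := by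
  simpa [Function.comp_def, div_eq_mul_inv] using
    (tendsto_nat_floor_mul_div_atTop hs).comp (tendsto_inv_nhdsGT_zero.comp ht)

lemma eventually_floor_div_mul_mem_Icc (ht : Tendsto t l (𝓝[>] 0)) (hs : 0 ≤ s) :
    ∀ᶠ i in l, ⌊s / t i⌋₊ * t i ∈ Icc 0 s := by
  filter_upwards [ht.eventually self_mem_nhdsWithin] with i (hti : 0 < t i)
  exact ⟨by positivity, (le_div_iff₀ hti).1 (Nat.floor_le (by positivity))⟩

lemma tendsto_volume_firstDiffSupport_floor_div_mul (hI : I.OrdConnected)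
    (hI_fin : volume I ≠ ⊤) (hG : Measurable G) (ht : Tendsto t l (𝓝[>] 0))
    (hdiff : Tendsto (fun i ↦ volume (secondDiffSupport I (t i) G) / ENNReal.ofReal (t i)) l
      (𝓝 0)) (hs : 0 < s) :
    Tendsto (fun i ↦ volume (firstDiffSupport I (⌊s / t i⌋₊ * t i) G)) l (𝓝 0) := by
  have hfloor : Tendsto (fun i ↦ ⌊s / t i⌋₊) l atTop :=
    tendsto_nat_floor_atTop.comp ((tendsto_inv_nhdsGT_zero.comp ht).const_mul_atTop hs)
  have hbound : Tendsto (fun i ↦ ENNReal.ofReal s *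
      (volume (secondDiffSupport I (t i) G) / ENNReal.ofReal (t i)) +
        2 * volume {x ∈ I | (⌊s / t i⌋₊ : ℤ) ≤ 2 * |G x|}) l (𝓝 0) := by
    have hlarge := (tendsto_measure_natCast_le_two_mul_abs hI.measurableSet hI_fin hG).comp hfloor
    simpa using (ENNReal.Tendsto.const_mul hdiff (Or.inr ENNReal.ofReal_ne_top)).add
      (ENNReal.Tendsto.const_mul hlarge (Or.inr ENNReal.ofNat_ne_top))
  refine tendsto_of_tendsto_of_tendsto_of_le_of_le' tendsto_const_nhds hbound
    (Eventually.of_forall fun _ ↦ zero_le) ?_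
  filter_upwards [ht.eventually self_mem_nhdsWithin] with i (hti : 0 < t i)
  refine (volume_firstDiffSupport_mul_le hI hti.le _ G).trans (add_le_add_left ?_ _)
  have hk : (⌊s / t i⌋₊ : ENNReal) ≤ ENNReal.ofReal s / ENNReal.ofReal (t i) := by
    rw [← ENNReal.ofReal_div_of_pos hti, ← ENNReal.ofReal_natCast]
    exact ENNReal.ofReal_le_ofReal (Nat.floor_le (by positivity))
  calc
    _ ≤ ENNReal.ofReal s / ENNReal.ofReal (t i) * volume (secondDiffSupport I (t i) G) := by gcongr
    _ = _ := by simp only [div_eq_mul_inv]; ring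

end Limit

section Invariance

variable {β : Type*} {I : Set ℝ} {G : ℝ → β} {s : ℝ}

lemma inter_preimage_add_right_diff_subset (hI : I.OrdConnected) {r : ℝ} (hr : r ∈ Icc 0 s)
    (b : β) :
    (I ∩ G ⁻¹' {b}) ∩ (· + s) ⁻¹' (I \ G ⁻¹' {b}) ⊆
      firstDiffSupport I r G ∪
        symmDiff ((· + r) ⁻¹' (I ∩ G ⁻¹' {b})) ((· + s) ⁻¹' (I ∩ G ⁻¹' {b})) := by
  rintro x ⟨⟨hx, hxb⟩, hxs, hxsb⟩
  have hxr : x + r ∈ I := hI.out hx hxs ⟨by linarith [hr.1], by linarith [hr.2]⟩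
  by_cases hxrb : G (x + r) = b
  · exact Or.inr (Or.inl ⟨⟨hxr, hxrb⟩, fun h ↦ hxsb h.2⟩)
  · exact Or.inl ⟨hx, hxr, fun h ↦ hxrb (h.trans hxb)⟩

lemma volume_firstDiffSupport_eq_zero_of_tendsto [Countable β] [MeasurableSpace β]
    [MeasurableSingletonClass β] (hI : I.OrdConnected) (hI_fin : volume I ≠ ⊤)
    (hG : Measurable G) {ι : Type*} {l : Filter ι} [l.NeBot] {r : ι → ℝ}
    (hr : Tendsto r l (𝓝 s)) (hr_mem : ∀ᶠ i in l, r i ∈ Icc 0 s)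
    (hdiff : Tendsto (fun i ↦ volume (firstDiffSupport I (r i) G)) l (𝓝 0)) :
    volume (firstDiffSupport I s G) = 0 := by
  have hcover : firstDiffSupport I s G ⊆
      ⋃ b, (I ∩ G ⁻¹' {b}) ∩ (· + s) ⁻¹' (I \ G ⁻¹' {b}) :=
    fun x ⟨hx, hxs, hne⟩ ↦ mem_iUnion.2 ⟨G x, ⟨hx, rfl⟩, hxs, hne⟩
  refine measure_mono_null hcover (measure_iUnion_null fun b ↦ ?_)
  have hlevel : MeasurableSet (I ∩ G ⁻¹' {b}) :=
    hI.measurableSet.inter (hG (measurableSet_singleton b))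
  have hlim := hdiff.add (tendsto_measure_symmDiff_preimage_add_right hr
    hlevel.nullMeasurableSet (measure_ne_top_of_subset inter_subset_left hI_fin))
  rw [add_zero] at hlim
  refine le_zero_iff.1 (ge_of_tendsto hlim (hr_mem.mono fun i hi ↦ ?_))
  exact (measure_mono (inter_preimage_add_right_diff_subset hI hi b)).trans (measure_union_le _ _)

lemma exists_ae_restrict_eq_const_of_volume_firstDiffSupport_eq_zero [Nonempty β]
    [Countable β] [MeasurableSpace β] [MeasurableSingletonClass β] (hI : MeasurableSet I)
    (hG : Measurable G) (hdiff : ∀ s, 0 < s → volume (firstDiffSupport I s G) = 0) :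
    ∃ b, ∀ᵐ x ∂volume.restrict I, G x = b := by
  have hall : ∀ s, ∀ᵐ x : ℝ, x ∈ I → x + s ∈ I → G (x + s) = G x := by
    intro s
    have hnull : volume (firstDiffSupport I s G) = 0 := by
      rcases lt_trichotomy s 0 with hs | rfl | hs
      · rw [← neg_neg s, firstDiffSupport_neg, measure_preimage_add_right]
        exact hdiff (-s) (neg_pos.2 hs)
      · simp [firstDiffSupport]
      · exact hdiff s hs
    filter_upwards [measure_eq_zero_iff_ae_notMem.1 hnull] with x hx hxI hxs
    exact not_not.1 fun hne ↦ hx ⟨hxI, hxs, hne⟩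
  have hadd : Measurable fun p : ℝ × ℝ ↦ p.2 + p.1 := measurable_snd.add measurable_fst
  have hmeas : MeasurableSet {p : ℝ × ℝ | p.2 ∈ I → p.2 + p.1 ∈ I → G (p.2 + p.1) = G p.2} :=
    (measurable_snd hI).imp <| (hadd hI).imp <|
      measurableSet_eq_fun (hG.comp hadd) (hG.comp measurable_snd)
  have hswap : ∀ᵐ x : ℝ, ∀ᵐ s : ℝ, x ∈ I → x + s ∈ I → G (x + s) = G x :=
    (Measure.ae_ae_comm hmeas).1 (Eventually.of_forall hall)
  rcases (ae (volume.restrict I)).eq_or_neBot with hbot | _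
  · exact ⟨Classical.arbitrary β, by simp [hbot]⟩
  obtain ⟨x, hx, hxI⟩ := ((ae_restrict_of_ae hswap).and (ae_restrict_mem hI)).exists
  refine ⟨G x, (ae_restrict_iff' hI).2 ?_⟩
  filter_upwards [ae_add_right_of_ae hx (-x)] with y hy hyI
  simpa [hxI, hyI] using hy

end Invariance

lemma exists_measurable_int_ae_eq {α : Type*} [MeasurableSpace α] {μ : Measure α} {g : α → ℝ}
    (hg : AEMeasurable g μ) (hgZ : ∀ᵐ x ∂μ, ∃ m : ℤ, g x = m) :
    ∃ G : α → ℤ, Measurable G ∧ ∀ᵐ x ∂μ, g x = G x := by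
  refine ⟨fun x ↦ ⌊hg.mk g x⌋, hg.measurable_mk.floor, ?_⟩
  filter_upwards [hg.ae_eq_mk, hgZ] with x hx ⟨m, hm⟩
  rw [← hx, hm, Int.floor_intCast]

lemma volume_secondDiffSupport_intCast_le {I : Set ℝ} (hI : I.OrdConnected) {t : ℝ} (ht : 0 ≤ t)
    {g : ℝ → ℝ} {G : ℝ → ℤ} (hgG : ∀ᵐ x ∂volume.restrict I, g x = G x) :
    volume (secondDiffSupport I t G) ≤ volume (secondDiffSupport I t g) := by
  have h0 := (ae_restrict_iff' hI.measurableSet).1 hgG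
  refine measure_mono_ae ?_
  filter_upwards [h0, ae_add_right_of_ae h0 t, ae_add_right_of_ae h0 (2 * t)]
    with x h0 h1 h2 ⟨hx, hx2, hne⟩
  have hx1 : x + t ∈ I := hI.out hx hx2 ⟨by linarith, by linarith⟩
  refine ⟨hx, hx2, ?_⟩
  rw [h0 hx, h1 hx1, h2 hx2]
  exact_mod_cast hne

lemma volume_firstDiffSupport_eq_zero {I : Set ℝ} (hI : I.OrdConnected) {G : ℝ → ℤ}
    (hG : Measurable G) {ι : Type*} {l : Filter ι} [l.NeBot] {t : ι → ℝ}
    (ht : Tendsto t l (𝓝[>] 0))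
    (hdiff : Tendsto (fun i ↦ volume (secondDiffSupport I (t i) G) / ENNReal.ofReal (t i)) l
      (𝓝 0)) {s : ℝ} (hs : 0 < s) :
    volume (firstDiffSupport I s G) = 0 := by
  rw [firstDiffSupport_eq_iUnion_inter_Icc]
  refine measure_iUnion_null fun n ↦ ?_
  have hJ : (I ∩ Icc (-n : ℝ) n).OrdConnected := hI.inter ordConnected_Icc
  have hJ_fin : volume (I ∩ Icc (-n : ℝ) n) ≠ ⊤ :=
    measure_ne_top_of_subset inter_subset_right measure_Icc_lt_top.ne
  have hdiffJ : Tendsto (fun i ↦ volume (secondDiffSupport (I ∩ Icc (-n : ℝ) n) (t i) G) /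
      ENNReal.ofReal (t i)) l (𝓝 0) :=
    tendsto_of_tendsto_of_tendsto_of_le_of_le tendsto_const_nhds hdiff (fun _ ↦ zero_le)
      fun i ↦ by gcongr; exact secondDiffSupport_mono inter_subset_left (t i) G
  exact volume_firstDiffSupport_eq_zero_of_tendsto hJ hJ_fin hG (tendsto_floor_div_mul ht hs.le)
    (eventually_floor_div_mul_mem_Icc ht hs.le)
    (tendsto_volume_firstDiffSupport_floor_div_mul hJ hJ_fin hG ht hdiffJ hs)

theorem integer_valued_constant_of_small_second_differences_general {I : Set ℝ}
    (hI : I.OrdConnected) {g : ℝ → ℝ} (hg : AEMeasurable g (volume.restrict I))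
    (hgZ : ∀ᵐ x ∂volume.restrict I, ∃ m : ℤ, g x = m)
    {ι : Type*} {l : Filter ι} [l.NeBot] {t : ι → ℝ} (ht : Tendsto t l (𝓝[>] 0))
    (hdiff : Tendsto (fun i ↦ volume (secondDiffSupport I (t i) g) / ENNReal.ofReal (t i)) l
      (𝓝 0)) :
    ∃ c : ℝ, ∀ᵐ x ∂volume.restrict I, g x = c := by
  obtain ⟨G, hG, hgG⟩ := exists_measurable_int_ae_eq hg hgZ
  have hdiffG : Tendsto (fun i ↦ volume (secondDiffSupport I (t i) G) / ENNReal.ofReal (t i)) l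
      (𝓝 0) := by
    refine tendsto_of_tendsto_of_tendsto_of_le_of_le' tendsto_const_nhds hdiff
      (Eventually.of_forall fun _ ↦ zero_le) ?_
    filter_upwards [ht.eventually self_mem_nhdsWithin] with i (hti : 0 < t i)
    exact ENNReal.div_le_div_right (volume_secondDiffSupport_intCast_le hI hti.le hgG) _
  obtain ⟨m, hm⟩ := exists_ae_restrict_eq_const_of_volume_firstDiffSupport_eq_zero
    hI.measurableSet hG fun s hs ↦ volume_firstDiffSupport_eq_zero hI hG ht hdiffG hs
  refine ⟨m, ?_⟩
  filter_upwards [hgG, hm] with x hgx hGx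
  rw [hgx, hGx]

section Delta2

variable {g : ℝ → ℝ} {t : ℝ}

lemma integrable_delta2 (hg : IntegrableOn g (Ioo 0 1)) (t : ℝ) : Integrable (delta2 t g) := by
  let g₀ := (Ioo (0 : ℝ) 1).indicator g
  have hg₀ : Integrable g₀ := hg.integrable_indicator measurableSet_Ioo
  let J : Set ℝ := Ioo 0 1 ∩ ((· + t) ⁻¹' Ioo 0 1 ∩ (· + 2 * t) ⁻¹' Ioo 0 1)
  have hJ : MeasurableSet J := by measurability
  have heq : delta2 t g = J.indicator fun x ↦ g₀ (x + 2 * t) - 2 * g₀ (x + t) + g₀ x := by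
    ext x
    by_cases hx : x ∈ J
    · obtain ⟨h0, h1 : x + t ∈ Ioo (0 : ℝ) 1, h2 : x + 2 * t ∈ Ioo (0 : ℝ) 1⟩ := id hx
      rw [delta2, if_pos ⟨h0, h1, h2⟩, indicator_of_mem hx]
      simp only [g₀, indicator_of_mem h0, indicator_of_mem h1, indicator_of_mem h2]
    · rw [indicator_of_notMem hx]
      exact if_neg hx
  rw [heq]
  exact (((hg₀.comp_add_right (2 * t)).sub ((hg₀.comp_add_right t).const_mul 2)).add
    hg₀).indicator hJ

lemma ae_exists_int_delta2_eq
    (hgZ : ∀ᵐ x ∂volume.restrict (Ioo (0 : ℝ) 1), ∃ m : ℤ, g x = m) (t : ℝ) :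
    ∀ᵐ x, ∃ m : ℤ, delta2 t g x = m := by
  have h0 := (ae_restrict_iff' measurableSet_Ioo).1 hgZ
  filter_upwards [h0, ae_add_right_of_ae h0 t, ae_add_right_of_ae h0 (2 * t)] with x h0 h1 h2
  unfold delta2
  split_ifs with hx
  · obtain ⟨a, ha⟩ := h0 hx.1
    obtain ⟨b, hb⟩ := h1 hx.2.1
    obtain ⟨c, hc⟩ := h2 hx.2.2
    exact ⟨c - 2 * b + a, by rw [ha, hb, hc]; push_cast; rfl⟩
  · exact ⟨0, Int.cast_zero.symm⟩

lemma delta2_ne_zero_of_mem_secondDiffSupport (ht : 0 ≤ t) {x : ℝ}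
    (hx : x ∈ secondDiffSupport (Ioo 0 1) t g) : delta2 t g x ≠ 0 := by
  obtain ⟨hx0, hx2, hne⟩ := hx
  have hx1 : x + t ∈ Ioo (0 : ℝ) 1 := ⟨by linarith [hx0.1], by linarith [hx2.2]⟩
  rwa [delta2, if_pos ⟨hx0, hx1, hx2⟩]

lemma volume_secondDiffSupport_le_integral_abs_delta2 (hg : IntegrableOn g (Ioo 0 1))
    (hgZ : ∀ᵐ x ∂volume.restrict (Ioo (0 : ℝ) 1), ∃ m : ℤ, g x = m) (ht : 0 ≤ t) :
    volume (secondDiffSupport (Ioo 0 1) t g) ≤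
      ENNReal.ofReal (∫ x in Ioo (0 : ℝ) 1, |delta2 t g x|) := by
  have hle : secondDiffSupport (Ioo 0 1) t g ≤ᵐ[volume]
      ({x | 1 ≤ |delta2 t g x|} ∩ Ioo 0 1 : Set ℝ) := by
    filter_upwards [ae_exists_int_delta2_eq hgZ t] with x ⟨m, hm⟩ hx
    have hne := delta2_ne_zero_of_mem_secondDiffSupport ht hx
    refine ⟨?_, hx.1⟩
    rw [mem_ofPred_eq, hm]
    rw [hm, Int.cast_ne_zero] at hne
    exact_mod_cast Int.one_le_abs hne
  calc
    volume (secondDiffSupport (Ioo 0 1) t g)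
      ≤ volume ({x | 1 ≤ |delta2 t g x|} ∩ Ioo 0 1) := measure_mono_ae hle
    _ = volume.restrict (Ioo 0 1) {x | 1 ≤ |delta2 t g x|} :=
        (Measure.restrict_apply' measurableSet_Ioo).symm
    _ ≤ ENNReal.ofReal (∫ x in Ioo (0 : ℝ) 1, |delta2 t g x|) :=
        (integrable_delta2 hg t).abs.integrableOn.measure_le_integral
          (Eventually.of_forall fun _ ↦ abs_nonneg _) fun _ hx ↦ hx

lemma tendsto_volume_secondDiffSupport_div (hg : IntegrableOn g (Ioo 0 1))
    (hgZ : ∀ᵐ x ∂volume.restrict (Ioo (0 : ℝ) 1), ∃ m : ℤ, g x = m)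
    {ι : Type*} {l : Filter ι} {t : ι → ℝ} (ht : ∀ i, 0 < t i)
    (hdiff : Tendsto (fun i ↦ (∫ x in Ioo (0 : ℝ) 1, |delta2 (t i) g x|) / t i) l (𝓝 0)) :
    Tendsto (fun i ↦ volume (secondDiffSupport (Ioo 0 1) (t i) g) / ENNReal.ofReal (t i)) l
      (𝓝 0) := by
  have hlim := ENNReal.tendsto_ofReal hdiff
  rw [ENNReal.ofReal_zero] at hlim
  refine tendsto_of_tendsto_of_tendsto_of_le_of_le tendsto_const_nhds hlim (fun _ ↦ zero_le)
    fun i ↦ ?_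
  dsimp only
  rw [ENNReal.ofReal_div_of_pos (ht i)]
  gcongr
  exact volume_secondDiffSupport_le_integral_abs_delta2 hg hgZ (ht i).le

end Delta2

/-- **Integer-valued functions with small second differences are constant.**
If `g ∈ L¹((0,1); ℤ)` and `‖Δ²_{t_l} g‖_{L¹((0,1))} / t_l → 0` along some sequence
`t_l → 0⁺`, then `g` is constant a.e. on `(0,1)`. -/
theorem integer_valued_constant_of_small_second_differences
    (g : ℝ → ℝ) (hgInt : IntegrableOn g (Set.Ioo (0 : ℝ) 1))
    (hgZ : ∀ᵐ x ∂volume.restrict (Set.Ioo (0 : ℝ) 1), ∃ m : ℤ, g x = (m : ℝ))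
    (t : ℕ → ℝ) (htpos : ∀ l, 0 < t l) (htlim : Tendsto t atTop (𝓝 0))
    (hdiff : Tendsto (fun l => (∫ x in Set.Ioo (0 : ℝ) 1, |delta2 (t l) g x|) / t l)
      atTop (𝓝 0)) :
    ∃ c : ℝ, ∀ᵐ x ∂volume.restrict (Set.Ioo (0 : ℝ) 1), g x = c :=
  integer_valued_constant_of_small_second_differences_general ordConnected_Ioo hgInt.aemeasurable
    hgZ (tendsto_nhdsWithin_iff.2 ⟨htlim, Eventually.of_forall htpos⟩)
    (tendsto_volume_secondDiffSupport_div hgInt hgZ htpos hdiff)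

end
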